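/- arXiv:1805.10585 — 2 statements merged into one kernel-verified Lean document; each statement's English description precedes it below -/
import Mathlib

section
/- For every point t_0 ∈ ℤ^ν, the number of sets C ∈ 𝔅 with t_0 ∈ C is at most (4ν)^{2r−1}. -/
/-!
A set `C ∈ 𝔅` containing `t0` lies in the vertex set of a 1-connected graph with at most `r` edges.
Traversing a spanning tree of that graph gives a closed walk from `t0` of length at most `2r`
through all vertices (`exists_closed_walk`): it is grown from the trivial walk by inserting a
detour `w, v, w` along an edge leaving the set already visited, so that every new vertex costs
one new edge and two steps. The final step returns to `t0`, so at most `2r - 1` steps matter.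

The set `C` is recovered from such a walk by recording, at each step, the direction
(`2ν` choices) and whether the point reached belongs to `C` (2 choices). After padding with
unmarked steps, `C` is thus encoded by a word of length exactly `2r - 1` over an alphabet of `4ν`
letters (`exists_code`), and there are `(4ν)^(2r-1)` such words.
-/

open scoped BigOperators

/-- Points of the lattice ℤ^ν. -/
abbrev Pt (ν : ℕ) := Fin ν → ℤ

/-- The ℓ¹ distance on ℤ^ν: ‖s − t‖ = Σᵢ |sᵢ − tᵢ|. -/
def latDist {ν : ℕ} (s t : Pt ν) : ℕ := ∑ i, (s i - t i).natAbs

/-- A graph `(V, E)` with vertices in ℤ^ν is 1-connected if every edge joins two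
vertices of `V` at distance 1 and the graph is connected. -/
def IsOneConnected {ν : ℕ} (V : Finset (Pt ν)) (E : Finset (Sym2 (Pt ν))) : Prop :=
  (∀ e ∈ E, ∀ x ∈ e, x ∈ V) ∧
  (∀ x y : Pt ν, s(x, y) ∈ E → latDist x y = 1) ∧
  (∀ x ∈ V, ∀ y ∈ V, Relation.ReflTransGen (fun a b => s(a, b) ∈ E) x y)

/-- The size `S(B)` of a finite set `B ⊆ ℤ^ν`: the minimal number of edges of a
1-connected graph `(V, E)` with `B ⊆ V`. -/
noncomputable def lsize {ν : ℕ} (B : Finset (Pt ν)) : ℕ :=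
  sInf {m | ∃ V E, IsOneConnected V E ∧ B ⊆ V ∧ E.card = m}

/-- The collection 𝔅 of finite subsets of ℤ^ν with 1 ≤ S(B) ≤ r. -/
def Bfam (ν r : ℕ) : Set (Finset (Pt ν)) := {B | 1 ≤ lsize B ∧ lsize B ≤ r}

/-- The unit step of `ℤ^ν` along coordinate `d.1`, positive when `d.2 = true` and negative
otherwise. -/
def unitStep {ν : ℕ} (d : Fin ν × Bool) : Pt ν := Pi.single d.1 (if d.2 then 1 else -1)

/-- The set of marked points on the walk from `t` encoded by a word; a letter is a direction
together with a flag telling whether the point reached is marked. The starting point `t` itself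
is not counted. -/
def decode {ν : ℕ} : Pt ν → List ((Fin ν × Bool) × Bool) → Finset (Pt ν)
  | _, [] => ∅
  | t, (d, b) :: L => (if b then {t + unitStep d} else ∅) ∪ decode (t + unitStep d) L

lemma exists_unitStep {ν : ℕ} {s t : Pt ν} (h : latDist s t = 1) :
    ∃ d, t = s + unitStep d := by
  unfold latDist at h
  obtain ⟨i, hi, hi0⟩ := Finset.exists_ne_zero_of_sum_ne_zero (h.trans_ne one_ne_zero)
  have hsplit := Finset.add_sum_erase Finset.univ (fun i => (s i - t i).natAbs) hi
  simp only [h] at hsplit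
  have hi1 : (s i - t i).natAbs = 1 := by omega
  have hrest : ∑ j ∈ Finset.univ.erase i, (s j - t j).natAbs = 0 := by omega
  refine ⟨(i, decide (t i = s i + 1)), ?_⟩
  funext j
  by_cases hj : j = i
  · subst hj
    simp only [unitStep, Pi.add_apply, Pi.single_eq_same]
    by_cases hc : t j = s j + 1
    · simp [hc]
    · simp only [hc, decide_false]
      simp
      omega
  · have := Finset.sum_eq_zero_iff.1 hrest j (Finset.mem_erase.2 ⟨hj, Finset.mem_univ j⟩)
    simp only [unitStep, Pi.add_apply, Pi.single_eq_of_ne hj]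
    omega

lemma decode_replicate {ν : ℕ} (d : Fin ν × Bool) (n : ℕ) (t : Pt ν) :
    decode t (List.replicate n (d, false)) = ∅ := by
  induction n generalizing t with
  | zero => rfl
  | succ n ih => simp [List.replicate_succ, decode, ih]

/-- A nearest-neighbour walk `t :: l` of at most `n` steps yields a word of length exactly `n`
marking the points of `l` that belong to `C`. -/
lemma exists_code {ν : ℕ} (hν : 1 ≤ ν) (C : Finset (Pt ν)) (l : List (Pt ν)) :
    ∀ (t : Pt ν) (n : ℕ), (t :: l).IsChain (fun a b => latDist a b = 1) → l.length ≤ n →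
      ∃ L, L.length = n ∧ decode t L = l.toFinset.filter (· ∈ C) := by
  induction l with
  | nil =>
    intro t n _ _
    exact ⟨List.replicate n ((⟨0, hν⟩, true), false), by simp, by simp [decode_replicate]⟩
  | cons x l ih =>
    intro t n hc hn
    rw [List.isChain_cons_cons] at hc
    obtain ⟨d, hd⟩ := exists_unitStep hc.1
    simp only [List.length_cons] at hn
    obtain ⟨L, hL, hdec⟩ := ih x (n - 1) hc.2 (by omega)
    refine ⟨(d, decide (x ∈ C)) :: L, by simp only [List.length_cons]; omega, ?_⟩
    simp only [decode, ← hd, hdec]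
    ext y
    by_cases hx : x ∈ C
    · simp only [hx, decide_true, if_true, Finset.mem_union, Finset.mem_singleton,
        Finset.mem_filter, List.mem_toFinset, List.mem_cons]
      grind
    · simp only [hx, decide_false, Bool.false_eq_true, if_false, Finset.mem_union,
        Finset.mem_filter, List.mem_toFinset, List.mem_cons, Finset.notMem_empty]
      grind

/-- A path from inside `W` to outside `W` has a step leaving `W`. -/
lemma exists_exit {α : Type*} {R : α → α → Prop} {W : α → Prop} {x y : α}
    (h : Relation.ReflTransGen R x y) (hx : W x) (hy : ¬ W y) :
    ∃ a b, W a ∧ ¬ W b ∧ R a b := by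
  induction h with
  | refl => exact absurd hx hy
  | @tail b c _ hbc ih =>
    by_cases hb : W b
    · exact ⟨b, c, hb, hy, hbc⟩
    · exact ih hb

/-- A 1-connected graph has a closed walk from any of its vertices visiting all vertices, of
length twice the size of some set `F` of edges (those of a spanning tree). -/
lemma exists_closed_walk {ν : ℕ} {V : Finset (Pt ν)} {E : Finset (Sym2 (Pt ν))}
    (h : IsOneConnected V E) {t0 : Pt ν} (ht : t0 ∈ V) :
    ∃ (L : List (Pt ν)) (F : Finset (Sym2 (Pt ν))), L.head? = some t0 ∧ L.getLast? = some t0 ∧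
      L.IsChain (fun a b => s(a, b) ∈ E) ∧ F ⊆ E ∧ L.length = 2 * F.card + 1 ∧
      ∀ x ∈ V, x ∈ L := by
  classical
  -- A closed walk either covers `V` or can be extended; after `V.card` extensions it must cover.
  have key : ∀ k : ℕ, ∃ (L : List (Pt ν)) (F : Finset (Sym2 (Pt ν))),
      L.head? = some t0 ∧ L.getLast? = some t0 ∧
      L.IsChain (fun a b => s(a, b) ∈ E) ∧ F ⊆ E ∧ L.length = 2 * F.card + 1 ∧
      (∀ x ∈ L, x ∈ V) ∧ (∀ e ∈ F, ∀ x ∈ e, x ∈ L) ∧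
      ((∀ x ∈ V, x ∈ L) ∨ k ≤ L.toFinset.card) := by
    intro k
    induction k with
    | zero => exact ⟨[t0], ∅, by simp [ht]⟩
    | succ k ih =>
      obtain ⟨L, F, hh, hl, hc, hF, hlen, hLV, hFL, hk⟩ := ih
      by_cases hall : ∀ x ∈ V, x ∈ L
      · exact ⟨L, F, hh, hl, hc, hF, hlen, hLV, hFL, Or.inl hall⟩
      replace hk := hk.resolve_left hall
      push Not at hall
      obtain ⟨y, hyV, hyL⟩ := hall
      obtain ⟨w, v, hw, hv, hwv⟩ := exists_exit (W := fun x => x ∈ L)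
        (h.2.2 t0 ht y hyV) (List.mem_of_mem_head? hh) hyL
      have hvw : s(v, w) ∈ E := by rwa [Sym2.eq_swap]
      have hvV : v ∈ V := h.1 _ hwv v (by simp)
      -- The edge is new because all edges of `F` have both ends on the walk.
      have hnew : s(w, v) ∉ F := fun hm => hv (hFL _ hm v (by simp))
      obtain ⟨l₁, l₂, rfl⟩ := List.append_of_mem hw
      have hmem : ∀ x, x ∈ l₁ ++ w :: v :: w :: l₂ ↔ x = v ∨ x ∈ l₁ ++ w :: l₂ := by
        intro x
        simp only [List.mem_append, List.mem_cons]
        tauto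
      refine ⟨l₁ ++ w :: v :: w :: l₂, insert s(w, v) F, ?_, ?_, ?_, ?_, ?_, ?_, ?_, Or.inr ?_⟩
      · cases l₁ <;> simpa using hh
      · simpa [List.getLast?_append, List.getLast?_cons] using hl
      · rw [List.isChain_split] at hc ⊢
        refine ⟨hc.1, ?_⟩
        rw [List.isChain_cons_cons, List.isChain_cons_cons]
        exact ⟨hwv, hvw, hc.2⟩
      · exact Finset.insert_subset hwv hF
      · rw [Finset.card_insert_of_notMem hnew]
        simp only [List.length_append, List.length_cons] at hlen ⊢
        omega
      · intro x hx
        rcases (hmem x).1 hx with rfl | hx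
        · exact hvV
        · exact hLV x hx
      · intro e he x hx
        rw [hmem]
        rcases Finset.mem_insert.1 he with rfl | he
        · rcases Sym2.mem_iff.1 hx with rfl | rfl
          · exact Or.inr hw
          · exact Or.inl rfl
        · exact Or.inr (hFL e he x hx)
      · have : (l₁ ++ w :: v :: w :: l₂).toFinset = insert v (l₁ ++ w :: l₂).toFinset := by
          ext x
          rw [List.mem_toFinset, hmem, Finset.mem_insert, List.mem_toFinset]
        rw [this, Finset.card_insert_of_notMem (by rwa [List.mem_toFinset])]
        omega
  obtain ⟨L, F, hh, hl, hc, hF, hlen, hLV, -, hk⟩ := key (V.card + 1)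
  refine ⟨L, F, hh, hl, hc, hF, hlen, hk.resolve_right ?_⟩
  have : L.toFinset.card ≤ V.card :=
    Finset.card_le_card fun x hx => hLV x (List.mem_toFinset.1 hx)
  omega

lemma exists_code_of_mem {ν r : ℕ} (hν : 1 ≤ ν) {t0 : Pt ν} {C : Finset (Pt ν)}
    (hC : C ∈ Bfam ν r) (ht : t0 ∈ C) :
    ∃ L, L.length = 2 * r - 1 ∧ insert t0 (decode t0 L) = C := by
  -- `1 ≤ lsize C` rules out the junk value `sInf ∅ = 0`, so the minimum is attained.
  have hne : {m | ∃ V E, IsOneConnected V E ∧ C ⊆ V ∧ E.card = m}.Nonempty := by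
    by_contra hcon
    have h0 := hC.1
    rw [lsize, Set.not_nonempty_iff_eq_empty.1 hcon, Nat.sInf_empty] at h0
    omega
  obtain ⟨V, E, hVE, hCV, hE⟩ := Nat.sInf_mem hne
  have hEr : E.card ≤ r := hE.trans_le hC.2
  obtain ⟨L, F, hh, hl, hc, hF, hlen, hall⟩ := exists_closed_walk hVE (hCV ht)
  have hFr := (Finset.card_le_card hF).trans hEr
  -- Drop the starting point and the final return to `t0`.
  obtain ⟨l, hchain, hll, hcov⟩ : ∃ l : List (Pt ν),
      (t0 :: l).IsChain (fun a b => s(a, b) ∈ E) ∧ l.length ≤ 2 * r - 1 ∧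
      ∀ x ∈ V, x = t0 ∨ x ∈ l := by
    obtain ⟨l, rfl⟩ : ∃ l, L = t0 :: l := by
      cases L with
      | nil => simp at hh
      | cons a l => exact ⟨l, by simpa using hh⟩
    rcases List.eq_nil_or_concat l with rfl | ⟨l', b, rfl⟩
    · exact ⟨[], hc, by simp, fun x hx => by simpa using hall x hx⟩
    · have hb : b = t0 := by
        rw [List.concat_eq_append, ← List.cons_append] at hl
        simpa only [List.getLast?_concat, Option.some.injEq] using hl
      subst hb
      refine ⟨l', ?_, ?_, ?_⟩
      · rw [List.concat_eq_append, ← List.cons_append] at hc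
        exact hc.left_of_append
      · simp at hlen
        omega
      · intro x hx
        have := hall x hx
        simp at this
        tauto
  obtain ⟨W, hW, hdec⟩ := exists_code hν C l t0 (2 * r - 1)
    (hchain.imp fun a b hab => hVE.2.1 a b hab) hll
  refine ⟨W, hW, ?_⟩
  rw [hdec]
  ext x
  simp only [Finset.mem_insert, Finset.mem_filter, List.mem_toFinset]
  constructor
  · rintro (rfl | hx)
    · exact ht
    · exact hx.2
  · intro hx
    rcases hcov x (hCV hx) with h | h
    · exact Or.inl h
    · exact Or.inr ⟨h, hx⟩

/-- For every point `t₀ ∈ ℤ^ν`, the number of sets `C ∈ 𝔅` with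
`t₀ ∈ C` is at most `(4ν)^{2r−1}`. -/
theorem card_Bfam_mem_le {ν r : ℕ} (hν : 1 ≤ ν) (hr : 1 ≤ r) (t0 : Pt ν) :
    {C | C ∈ Bfam ν r ∧ t0 ∈ C}.Finite ∧
    {C | C ∈ Bfam ν r ∧ t0 ∈ C}.ncard ≤ (4 * ν) ^ (2 * r - 1) := by
  let f : List.Vector ((Fin ν × Bool) × Bool) (2 * r - 1) → Finset (Pt ν) :=
    fun W => insert t0 (decode t0 W.toList)
  have hsub : {C | C ∈ Bfam ν r ∧ t0 ∈ C} ⊆ Set.range f := by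
    rintro C ⟨hC, ht⟩
    obtain ⟨L, hL, hdec⟩ := exists_code_of_mem hν hC ht
    exact ⟨⟨L, hL⟩, hdec⟩
  have hfin : (Set.range f).Finite := Set.finite_range f
  refine ⟨hfin.subset hsub, (Set.ncard_le_ncard hsub hfin).trans ?_⟩
  rw [← Set.image_univ]
  refine (Set.ncard_image_le Set.finite_univ).trans (le_of_eq ?_)
  rw [Set.ncard_univ, Nat.card_eq_fintype_card, card_vector]
  simp only [Fintype.card_prod, Fintype.card_fin, Fintype.card_bool]
  congr 1
  ring
end

section
/- Let Q ⊂ ℤ^ν be a finite set with at least two elements, q = S(Q), and fix an integer n > 1. Then the number of Q-connected families Γ of length n is less than 2^{2q}·(2·(8ν)^{2r})^n. -/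
/-!
Let `A = 2 ^ (s + 1) * K`. The counting principle is an exploration argument: items are discovered
by points, at most `K` items per point, and a discovered item brings at most `s` new points. Let
`f (P, m)` be the number of multisets of `m` items that can be completely discovered from the
finite point set `P`. Inspecting a point `p ∈ P`, either `p` discovers no item and can be dropped,
or one discovered item is removed and its points are added to `P`. Hence
`f (P, m) ≤ f (P \ {p}, m) + K * f (P', m - 1)` with `|P'| ≤ |P| + s`, which gives
`f (P, m) ≤ (2 ^ |P| - 1) * A ^ m` for `m ≥ 1` (`reachedSet_bound`).

The principle is used twice. Applied to lattice points marked with a Boolean (`K = 4 * ν`,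
`s = 1`, `A = 16 * ν`), it counts the subsets of 1-connected graphs with at most `r` edges and
shows that at most `2 * (16 * ν) ^ r` sets of `𝔅` pass through a given point
(`Bfam_point_bound`). Applied to the sets of `𝔅` themselves (`s = r`, since a set of size at most
`r` has at most `r + 1` points), it counts the `Q`-connected families, with `|Q| ≤ q + 1`.
-/

open scoped BigOperators

/-- A family `Γ = {(C₁,n₁), …, (C_k,n_k)}` of distinct sets with positive multiplicities
is encoded as a finitely supported function `Γ : Finset (ℤ^ν) →₀ ℕ`; its length is
`|Γ| = n₁ + ⋯ + n_k`. -/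
def famLen {ν : ℕ} (Γ : Finset (Pt ν) →₀ ℕ) : ℕ := Γ.sum fun _ n => n

/-- A finite sequence of subsets of ℤ^ν is connected if the graph on its index set,
with an edge between `i` and `j` whenever the `i`-th and `j`-th sets intersect,
is connected. -/
def listConnected {ν : ℕ} (l : List (Finset (Pt ν))) : Prop :=
  ∀ i j : Fin l.length,
    Relation.ReflTransGen (fun a b : Fin l.length => (l.get a ∩ l.get b).Nonempty) i j

/-- A family `Γ = {(C₁,n₁), …, (C_k,n_k)}` is `Q`-connected if the sequence
`(Q, C₁, …, C_k)` is connected. -/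
def QConnected {ν : ℕ} (Q : Finset (Pt ν)) (Γ : Finset (Pt ν) →₀ ℕ) : Prop :=
  listConnected (Q :: Γ.support.toList)

/-! ### The exploration bound -/

/-- A multiset `T` of items is reached from the point set `P` when every item of `T` can be
discovered by starting from `P`: a known point `p` discovers an item `c` when `R p c`, and a
discovered item `c` makes all points of `pts c` known. Reachability is encoded impredicatively:
every set of items closed under discovery contains `T`. -/
def Reached {β α : Type*} (R : β → α → Prop) (pts : α → Finset β) (P : Finset β)
    (T : Multiset α) : Prop :=
  ∀ S : Set α, (∀ c ∈ T, (∃ p ∈ P, R p c) → c ∈ S) →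
    (∀ c ∈ T, c ∈ S → ∀ d ∈ T, (∃ p ∈ pts c, R p d) → d ∈ S) → ∀ c ∈ T, c ∈ S

/-- The multisets of `m` items reached from `P`. -/
def reachedSet {β α : Type*} (R : β → α → Prop) (pts : α → Finset β) (P : Finset β) (m : ℕ) :
    Set (Multiset α) :=
  {T | T.card = m ∧ Reached R pts P T}

lemma reachedSet_zero {β α : Type*} (R : β → α → Prop) (pts : α → Finset β) (P : Finset β) :
    reachedSet R pts P 0 ⊆ {0} := by
  rintro T ⟨h, -⟩
  simpa using h

lemma reachedSet_empty {β α : Type*} (R : β → α → Prop) (pts : α → Finset β) (m : ℕ) :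
    reachedSet R pts ∅ (m + 1) = ∅ := by
  rw [Set.eq_empty_iff_forall_notMem]
  rintro T ⟨hc, h⟩
  obtain ⟨a, ha⟩ := Multiset.card_pos_iff_exists_mem.1 (by omega : 0 < T.card)
  exact (h ∅ (by simp) (by simp) a ha).elim

/-- The recursion behind the count: either no item is discovered by `p`, and `p` may be
discarded, or one occurrence of such an item is removed and its points become known. -/
lemma reachedSet_insert {β α : Type*} [DecidableEq β] (R : β → α → Prop) (pts : α → Finset β)
    (p : β) (P : Finset β) (m : ℕ) :
    reachedSet R pts (insert p P) (m + 1) ⊆ reachedSet R pts P (m + 1) ∪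
      ⋃ c ∈ {c | R p c}, (fun T => c ::ₘ T) '' reachedSet R pts (insert p P ∪ pts c) m := by
  classical
  rintro T ⟨hcard, hT⟩
  by_cases h : ∃ c ∈ T, R p c
  · right
    obtain ⟨c, hcT, hc⟩ := h
    simp only [Set.mem_iUnion]
    refine ⟨c, hc, T.erase c, ⟨?_, ?_⟩, Multiset.cons_erase hcT⟩
    · rw [Multiset.card_erase_of_mem hcT, hcard]; rfl
    · intro S h1 h2 d hd
      have key := hT (insert c S) ?_ ?_ d (Multiset.mem_of_mem_erase hd)
      · rcases key with rfl | key
        -- a further occurrence of the removed item is still discovered by `p`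
        · exact h1 _ hd ⟨p, by simp, hc⟩
        · exact key
      · rintro e he ⟨x, hx, hxe⟩
        by_cases hec : e = c
        · exact Or.inl hec
        · exact Or.inr (h1 e ((Multiset.mem_erase_of_ne hec).2 he)
            ⟨x, Finset.mem_union_left _ hx, hxe⟩)
      · rintro e he heS f hf ⟨x, hx, hxf⟩
        by_cases hfc : f = c
        · exact Or.inl hfc
        · have hf' := (Multiset.mem_erase_of_ne hfc).2 hf
          right
          by_cases hec : e = c
          · subst hec
            exact h1 f hf' ⟨x, Finset.mem_union_right _ hx, hxf⟩
          · exact h2 e ((Multiset.mem_erase_of_ne hec).2 he) (heS.resolve_left hec) f hf'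
              ⟨x, hx, hxf⟩
  · left
    push Not at h
    refine ⟨hcard, fun S h1 h2 => hT S ?_ h2⟩
    rintro c hc ⟨x, hx, hxc⟩
    rcases Finset.mem_insert.1 hx with rfl | hx
    · exact (h c hc hxc).elim
    · exact h1 c hc ⟨x, hx, hxc⟩

/-- If every point discovers at most `K` items, and each of them brings at most `s` points other
than the discovering one, then with `A = 2 ^ (s + 1) * K` at most `(2 ^ |P| - 1) * A ^ (m + 1)`
multisets of size `m + 1` are reached from `P`. The weight `2 ^ |P|` makes the recursion
`reachedSet_insert` close up, since
`2 ^ |P| * A ^ (m + 1) + K * 2 ^ (|P| + s + 1) * A ^ m = 2 ^ (|P| + 1) * A ^ (m + 1)`. -/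
lemma reachedSet_bound {β α : Type*} [DecidableEq β] (R : β → α → Prop) (pts : α → Finset β)
    (K s : ℕ) (hfin : ∀ p, {c | R p c}.Finite) (hK : ∀ p, {c | R p c}.ncard ≤ K)
    (hs : ∀ p c, R p c → (insert p (pts c)).card ≤ s + 1) (m : ℕ) (P : Finset β) :
    (reachedSet R pts P (m + 1)).Finite ∧
      (reachedSet R pts P (m + 1)).ncard + (2 ^ (s + 1) * K) ^ (m + 1) ≤
        2 ^ P.card * (2 ^ (s + 1) * K) ^ (m + 1) := by
  -- Knowing the weaker bound in size `m` for all point sets gives the claim in size `m + 1`.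
  have step : ∀ m, (∀ P : Finset β, (reachedSet R pts P m).Finite ∧
      (reachedSet R pts P m).ncard ≤ 2 ^ P.card * (2 ^ (s + 1) * K) ^ m) →
      ∀ P : Finset β, (reachedSet R pts P (m + 1)).Finite ∧
      (reachedSet R pts P (m + 1)).ncard + (2 ^ (s + 1) * K) ^ (m + 1) ≤
        2 ^ P.card * (2 ^ (s + 1) * K) ^ (m + 1) := by
    intro m ih P
    induction P using Finset.induction_on with
    | empty => simp [reachedSet_empty]
    | insert p P hp ihP =>
      have hsub := reachedSet_insert R pts p P m
      have hU : (⋃ c ∈ {c | R p c}, (fun T => c ::ₘ T) ''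
          reachedSet R pts (insert p P ∪ pts c) m).Finite :=
        (hfin p).biUnion fun c _ => (ih _).1.image _
      have hfinU := ihP.1.union hU
      refine ⟨hfinU.subset hsub, ?_⟩
      have hterm : ∀ c ∈ (hfin p).toFinset,
          ((fun T => c ::ₘ T) '' reachedSet R pts (insert p P ∪ pts c) m).ncard ≤
            2 ^ (P.card + (s + 1)) * (2 ^ (s + 1) * K) ^ m := by
        intro c hc
        have hc' : R p c := by simpa using hc
        refine (Set.ncard_image_le (ih _).1).trans ((ih _).2.trans ?_)
        gcongr
        · norm_num
        · rw [Finset.insert_union, ← Finset.union_insert]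
          exact (Finset.card_union_le _ _).trans (by have := hs p c hc'; omega)
      have hUcard : (⋃ c ∈ {c | R p c}, (fun T => c ::ₘ T) ''
          reachedSet R pts (insert p P ∪ pts c) m).ncard ≤
          K * (2 ^ (P.card + (s + 1)) * (2 ^ (s + 1) * K) ^ m) := by
        have h1 := Finset.set_ncard_biUnion_le (hfin p).toFinset
          (fun c => (fun T => c ::ₘ T) '' reachedSet R pts (insert p P ∪ pts c) m)
        simp only [Set.Finite.mem_toFinset] at h1
        refine h1.trans ((Finset.sum_le_card_nsmul _ _ _ hterm).trans ?_)
        rw [smul_eq_mul, ← Set.ncard_eq_toFinset_card _ (hfin p)]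
        exact Nat.mul_le_mul_right _ (hK p)
      have h2 := (Set.ncard_le_ncard hsub hfinU).trans (Set.ncard_union_le _ _)
      have h3 := ihP.2
      rw [Finset.card_insert_of_notMem hp]
      have h4 : K * (2 ^ (P.card + (s + 1)) * (2 ^ (s + 1) * K) ^ m) =
          2 ^ P.card * (2 ^ (s + 1) * K) ^ (m + 1) := by ring
      have h5 : 2 ^ (P.card + 1) * (2 ^ (s + 1) * K) ^ (m + 1) =
          2 ^ P.card * (2 ^ (s + 1) * K) ^ (m + 1) +
          2 ^ P.card * (2 ^ (s + 1) * K) ^ (m + 1) := by ring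
      omega
  have weak : ∀ m, ∀ P : Finset β, (reachedSet R pts P m).Finite ∧
      (reachedSet R pts P m).ncard ≤ 2 ^ P.card * (2 ^ (s + 1) * K) ^ m := by
    intro m
    induction m with
    | zero =>
      intro P
      have h := reachedSet_zero R pts P
      refine ⟨(Set.finite_singleton _).subset h, ?_⟩
      have h1 := Set.ncard_le_ncard h
      rw [Set.ncard_singleton] at h1
      simpa using h1.trans Nat.one_le_two_pow
    | succ m ih =>
      intro P
      exact ⟨(step m ih P).1, le_of_add_le_left (step m ih P).2⟩
  exact step m (weak m) P

/-! ### Lattice neighbours and sizes -/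

/-- Each lattice point has at most `2 * ν` neighbours: a neighbour is given by a coordinate and
a direction. -/
lemma neighbours_subset {ν : ℕ} (p : Pt ν) :
    {v : Pt ν | latDist p v = 1} ⊆ Set.range (fun ib : Fin ν × Bool =>
      Function.update p ib.1 (p ib.1 + if ib.2 then 1 else -1)) := by
  intro v hv
  have hv : ∑ i, (p i - v i).natAbs = 1 := hv
  obtain ⟨i, -, hi⟩ := Finset.exists_ne_zero_of_sum_ne_zero (by rw [hv]; norm_num)
  have hsplit := Finset.add_sum_erase Finset.univ (fun i => (p i - v i).natAbs) (Finset.mem_univ i)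
  have h0 : ∑ x ∈ Finset.univ.erase i, (p x - v x).natAbs = 0 := by omega
  have h1 : (p i - v i).natAbs = 1 := by omega
  rw [Finset.sum_eq_zero_iff] at h0
  refine ⟨(i, decide (p i < v i)), ?_⟩
  funext j
  by_cases hj : j = i
  · subst hj
    by_cases h : p j < v j <;> simp [h] <;> omega
  · have := h0 j (by simp [hj])
    simp only [Function.update_of_ne hj]
    omega

lemma latDist_comm {ν : ℕ} (x y : Pt ν) : latDist x y = latDist y x := by
  unfold latDist
  refine Finset.sum_congr rfl fun i _ => ?_
  omega

/-- Every finite set lies in a 1-connected graph, for instance in an order interval of `ℤ^ν` with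
all its unit edges, so the infimum defining `lsize` is attained. -/
lemma exists_oneConnected {ν : ℕ} (B : Finset (Pt ν)) :
    ∃ V E, IsOneConnected V E ∧ B ⊆ V ∧ E.card = lsize B := by
  classical
  have hne : {m | ∃ V E, IsOneConnected V E ∧ B ⊆ V ∧ E.card = m}.Nonempty := by
    obtain ⟨a, ha⟩ := B.bddBelow
    obtain ⟨b, hb⟩ := B.bddAbove
    set V := Finset.Icc a b with hV
    set E : Finset (Sym2 (Pt ν)) :=
      ((V ×ˢ V).filter (fun z => latDist z.1 z.2 = 1)).image (fun z => s(z.1, z.2)) with hE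
    have hEmem : ∀ x y, s(x, y) ∈ E ↔ x ∈ V ∧ y ∈ V ∧ latDist x y = 1 := by
      intro x y
      simp only [hE, Finset.mem_image, Finset.mem_filter, Finset.mem_product, Prod.exists,
        Sym2.eq_iff]
      constructor
      · rintro ⟨u, v, ⟨⟨hu, hv⟩, hd⟩, ⟨rfl, rfl⟩ | ⟨rfl, rfl⟩⟩
        · exact ⟨hu, hv, hd⟩
        · exact ⟨hv, hu, by rwa [latDist_comm]⟩
      · rintro ⟨hx, hy, hd⟩
        exact ⟨x, y, ⟨⟨hx, hy⟩, hd⟩, Or.inl ⟨rfl, rfl⟩⟩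
    -- Every point of the box descends to its lowest corner `a`, one unit step at a time.
    have hdesc : ∀ k : ℕ, ∀ x ∈ V, latDist x a = k →
        Relation.ReflTransGen (fun u v => s(u, v) ∈ E) x a := by
      intro k
      induction k with
      | zero =>
        intro x hx hk
        have : x = a := by
          funext i
          have := Finset.sum_eq_zero_iff.1 hk i (Finset.mem_univ i)
          omega
        rw [this]
      | succ k ih =>
        intro x hx hk
        have hk' : ∑ i, (x i - a i).natAbs = k + 1 := hk
        obtain ⟨i, -, hi⟩ := Finset.exists_ne_zero_of_sum_ne_zero (by rw [hk']; omega)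
        have hxab := Finset.mem_Icc.1 hx
        have hlt : a i < x i := by
          have : a i ≤ x i := hxab.1 i
          omega
        set y := Function.update x i (x i - 1) with hy
        have hyi : y i = x i - 1 := by simp [hy]
        have hyj : ∀ j, j ≠ i → y j = x j := fun j hj => by simp [hy, hj]
        have hyV : y ∈ V := by
          refine Finset.mem_Icc.2 ⟨fun j => ?_, fun j => ?_⟩
          · have : a j ≤ x j := hxab.1 j
            by_cases hj : j = i
            · subst hj
              change a j ≤ y j
              omega
            · rw [hyj j hj]; exact this
          · have : x j ≤ b j := hxab.2 j
            by_cases hj : j = i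
            · subst hj
              change y j ≤ b j
              omega
            · rw [hyj j hj]; exact this
        have hxy : latDist x y = 1 := by
          unfold latDist
          rw [Finset.sum_eq_single i]
          · omega
          · intro j _ hj
            rw [hyj j hj]; simp
          · simp
        have hya : latDist y a = k := by
          have e1 := Finset.add_sum_erase Finset.univ (fun i => (x i - a i).natAbs)
            (Finset.mem_univ i)
          have e2 := Finset.add_sum_erase Finset.univ (fun i => (y i - a i).natAbs)
            (Finset.mem_univ i)
          have e3 : ∑ j ∈ Finset.univ.erase i, (y j - a j).natAbs =
              ∑ j ∈ Finset.univ.erase i, (x j - a j).natAbs :=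
            Finset.sum_congr rfl fun j hj => by rw [hyj j (Finset.ne_of_mem_erase hj)]
          unfold latDist
          omega
        exact Relation.ReflTransGen.head ((hEmem x y).2 ⟨hx, hyV, hxy⟩) (ih y hyV hya)
    have hsymm : ∀ x ∈ V, Relation.ReflTransGen (fun u v => s(u, v) ∈ E) a x := by
      intro x hx
      have h := hdesc _ x hx rfl
      rw [← Relation.reflTransGen_swap] at h
      refine Relation.ReflTransGen.mono (fun u v huv => ?_) _ _ h
      rw [Sym2.eq_swap]
      exact huv
    refine ⟨E.card, V, E, ⟨?_, ?_, ?_⟩, ?_, rfl⟩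
    · intro e
      induction e using Sym2.ind with
      | _ x y =>
        intro he z hz
        have := (hEmem x y).1 he
        rcases Sym2.mem_iff.1 hz with rfl | rfl
        · exact this.1
        · exact this.2.1
    · intro x y hxy
      exact ((hEmem x y).1 hxy).2.2
    · intro x hx y hy
      exact (hdesc _ x hx rfl).trans (hsymm y hy)
    · intro x hx
      exact Finset.mem_Icc.2 ⟨ha hx, hb hx⟩
  exact Nat.sInf_mem hne

/-- A 1-connected graph has at most one more vertex than it has edges. -/
lemma IsOneConnected.card_le {ν : ℕ} {V : Finset (Pt ν)} {E : Finset (Sym2 (Pt ν))}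
    (h : IsOneConnected V E) : V.card ≤ E.card + 1 := by
  classical
  obtain ⟨hV, hd, hc⟩ := h
  rcases V.eq_empty_or_nonempty with rfl | ⟨x₀, hx₀⟩
  · simp
  let G : SimpleGraph V :=
    { Adj := fun a b => s(a.1, b.1) ∈ E
      symm := ⟨fun a b hab => by rwa [Sym2.eq_swap]⟩
      loopless := ⟨fun a ha => by simpa [latDist] using hd _ _ ha⟩ }
  have hconn : G.Connected := by
    have : Nonempty V := ⟨⟨x₀, hx₀⟩⟩
    refine SimpleGraph.Connected.mk ?_
    intro a b
    have key : ∀ y, Relation.ReflTransGen (fun a b => s(a, b) ∈ E) a.1 y →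
        ∀ hy : y ∈ V, G.Reachable a ⟨y, hy⟩ := by
      intro y hy
      induction hy with
      | refl => intro _; exact SimpleGraph.Reachable.refl _
      | @tail u v _ huv ih =>
        intro hv
        have hu : u ∈ V := hV _ huv u (Sym2.mem_mk_left _ _)
        exact (ih hu).trans (SimpleGraph.Adj.reachable (G := G) (u := ⟨u, hu⟩) (v := ⟨v, hv⟩) huv)
    exact key b.1 (hc _ a.2 _ b.2) b.2
  have h1 := hconn.card_vert_le_card_edgeSet_add_one
  have h2 : Nat.card G.edgeSet ≤ Nat.card E := by
    refine Nat.card_le_card_of_injective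
      (fun e => (⟨Sym2.map Subtype.val e.1, ?_⟩ : E)) ?_
    · obtain ⟨e, he⟩ := e
      induction e using Sym2.ind with
      | _ x y => exact he
    · intro e f hef
      exact Subtype.ext (Sym2.map.injective Subtype.val_injective (congrArg Subtype.val hef))
  simp only [Nat.card_eq_fintype_card, Fintype.card_coe] at h1 h2
  omega

lemma card_le_lsize_add_one {ν : ℕ} (B : Finset (Pt ν)) : B.card ≤ lsize B + 1 := by
  obtain ⟨V, E, h, hB, hE⟩ := exists_oneConnected B
  have h1 := h.card_le
  have h2 := Finset.card_le_card hB
  omega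

/-! ### Sets of bounded size through a point -/

/-- Items are lattice points carrying a mark; a point discovers the marked points next to it. -/
def adjMarked {ν : ℕ} (p : Pt ν) (c : Pt ν × Bool) : Prop := latDist p c.1 = 1

/-- With marks, a point has at most `2 * (2 * ν)` neighbours. -/
lemma adjMarked_bound {ν : ℕ} (p : Pt ν) :
    {c : Pt ν × Bool | adjMarked p c}.Finite ∧
      {c : Pt ν × Bool | adjMarked p c}.ncard ≤ 4 * ν := by
  have hsub : {c : Pt ν × Bool | adjMarked p c} ⊆
      Set.range (fun z : (Fin ν × Bool) × Bool =>
        (Function.update p z.1.1 (p z.1.1 + if z.1.2 then 1 else -1), z.2)) := by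
    rintro ⟨v, b⟩ hv
    obtain ⟨ib, hib⟩ := neighbours_subset p (show latDist p v = 1 from hv)
    exact ⟨(ib, b), Prod.ext hib rfl⟩
  refine ⟨(Set.finite_range _).subset hsub, (Set.ncard_le_ncard hsub (Set.finite_range _)).trans ?_⟩
  rw [← Set.image_univ]
  refine (Set.ncard_image_le Set.finite_univ).trans ?_
  rw [Set.ncard_univ]
  simp only [Nat.card_eq_fintype_card, Fintype.card_prod, Fintype.card_fin, Fintype.card_bool]
  omega

lemma adjMarked_reachedSet_bound {ν : ℕ} (x : Pt ν) (m : ℕ) :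
    (reachedSet adjMarked (fun c : Pt ν × Bool => {c.1}) {x} m).Finite ∧
      (reachedSet adjMarked (fun c : Pt ν × Bool => {c.1}) {x} m).ncard ≤ (16 * ν) ^ m := by
  cases m with
  | zero =>
    have h := reachedSet_zero (adjMarked (ν := ν)) (fun c => {c.1}) {x}
    refine ⟨(Set.finite_singleton _).subset h, ?_⟩
    simpa using Set.ncard_le_ncard h
  | succ m =>
    have h := reachedSet_bound (adjMarked (ν := ν)) (fun c => {c.1}) (4 * ν) 1
      (fun p => (adjMarked_bound p).1) (fun p => (adjMarked_bound p).2)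
      (fun p c _ => Finset.card_le_two) m {x}
    refine ⟨h.1, ?_⟩
    have h2 := h.2
    rw [show 2 ^ (1 + 1) * (4 * ν) = 16 * ν by ring, Finset.card_singleton] at h2
    omega

/-- A set of size at most `r` through `x` is recovered from the vertices `≠ x` of a 1-connected
graph containing it, each marked according to its membership in the set. -/
lemma Bfam_point_subset {ν r : ℕ} (x : Pt ν) :
    {B : Finset (Pt ν) | x ∈ B ∧ B ∈ Bfam ν r} ⊆
      ⋃ m ∈ Finset.range (r + 1), (fun T : Multiset (Pt ν × Bool) =>
        insert x ((T.filter (fun c => c.2 = true)).map Prod.fst).toFinset) ''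
        reachedSet adjMarked (fun c : Pt ν × Bool => {c.1}) {x} m := by
  classical
  rintro B ⟨hxB, -, hr⟩
  obtain ⟨V, E, h, hBV, hE⟩ := exists_oneConnected B
  have hcard := h.card_le
  have hxV := hBV hxB
  simp only [Set.mem_iUnion]
  set T : Multiset (Pt ν × Bool) := (V.erase x).val.map (fun v => (v, decide (v ∈ B))) with hT
  have hTmem : ∀ c, c ∈ T ↔ c.1 ∈ V ∧ c.1 ≠ x ∧ c.2 = decide (c.1 ∈ B) := by
    rintro ⟨v, b⟩
    simp only [hT, Multiset.mem_map, Finset.mem_val, Finset.mem_erase, Prod.mk.injEq]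
    constructor
    · rintro ⟨w, ⟨h1, h2⟩, rfl, rfl⟩
      exact ⟨h2, h1, rfl⟩
    · rintro ⟨h1, h2, h3⟩
      exact ⟨v, ⟨h2, h1⟩, rfl, h3.symm⟩
  refine ⟨(V.erase x).card, ?_, T, ⟨?_, ?_⟩, ?_⟩
  · rw [Finset.card_erase_of_mem hxV, Finset.mem_range]
    omega
  · rw [hT, Multiset.card_map, Finset.card_val]
  · intro S h1 h2 c hc
    have key : ∀ y, Relation.ReflTransGen (fun a b => s(a, b) ∈ E) x y →
        y = x ∨ (y, decide (y ∈ B)) ∈ S := by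
      intro y hy
      induction hy with
      | refl => exact Or.inl rfl
      | @tail u v _ huv ih =>
        by_cases hvx : v = x
        · exact Or.inl hvx
        right
        have hu : u ∈ V := h.1 _ huv u (Sym2.mem_mk_left _ _)
        have hv : v ∈ V := h.1 _ huv v (Sym2.mem_mk_right _ _)
        have hvT : (v, decide (v ∈ B)) ∈ T := (hTmem _).2 ⟨hv, hvx, rfl⟩
        by_cases hux : u = x
        · subst hux
          exact h1 _ hvT ⟨u, by simp, h.2.1 _ _ huv⟩
        · exact h2 _ ((hTmem _).2 ⟨hu, hux, rfl⟩) (ih.resolve_left hux) _ hvT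
            ⟨u, by simp, h.2.1 _ _ huv⟩
    obtain ⟨hc1, hc2, hc3⟩ := (hTmem c).1 hc
    have := (key c.1 (h.2.2 _ hxV _ hc1)).resolve_left hc2
    rwa [← hc3] at this
  · ext v
    simp only [Finset.mem_insert, Multiset.mem_toFinset, Multiset.mem_map, Multiset.mem_filter,
      hTmem]
    constructor
    · rintro (rfl | ⟨c, ⟨⟨_, _, h3⟩, h4⟩, rfl⟩)
      · exact hxB
      · rw [h4] at h3
        simpa using h3.symm
    · intro hv
      by_cases hvx : v = x
      · exact Or.inl hvx
      · exact Or.inr ⟨(v, true), ⟨⟨hBV hv, hvx, by simp [hv]⟩, rfl⟩, rfl⟩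

/-- At most `2 * (16 * ν) ^ r` sets of `𝔅` pass through a given point. -/
lemma Bfam_point_bound {ν r : ℕ} (hν : 1 ≤ ν) (x : Pt ν) :
    {B : Finset (Pt ν) | x ∈ B ∧ B ∈ Bfam ν r}.Finite ∧
      {B : Finset (Pt ν) | x ∈ B ∧ B ∈ Bfam ν r}.ncard ≤ 2 * (16 * ν) ^ r := by
  have hsub := Bfam_point_subset (r := r) x
  have hfin : (⋃ m ∈ Finset.range (r + 1), (fun T : Multiset (Pt ν × Bool) =>
        insert x ((T.filter (fun c => c.2 = true)).map Prod.fst).toFinset) ''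
        reachedSet adjMarked (fun c : Pt ν × Bool => {c.1}) {x} m).Finite :=
    (Finset.finite_toSet _).biUnion fun m _ => (adjMarked_reachedSet_bound x m).1.image _
  refine ⟨hfin.subset hsub, (Set.ncard_le_ncard hsub hfin).trans
    ((Finset.set_ncard_biUnion_le _ _).trans ?_)⟩
  have h1 : ∀ m ∈ Finset.range (r + 1), ((fun T : Multiset (Pt ν × Bool) =>
        insert x ((T.filter (fun c => c.2 = true)).map Prod.fst).toFinset) ''
        reachedSet adjMarked (fun c : Pt ν × Bool => {c.1}) {x} m).ncard ≤ (16 * ν) ^ m :=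
    fun m _ => (Set.ncard_image_le (adjMarked_reachedSet_bound x m).1).trans
      (adjMarked_reachedSet_bound x m).2
  refine (Finset.sum_le_sum h1).trans ?_
  clear h1 hfin hsub
  induction r with
  | zero => simp
  | succ r ih =>
    rw [Finset.sum_range_succ, pow_succ]
    have : (16 * ν) ^ r * 2 ≤ (16 * ν) ^ r * (16 * ν) := Nat.mul_le_mul_left _ (by omega)
    omega

/-! ### Families -/

/-- A point of a set of `𝔅` discovers that set. -/
def memBfam {ν : ℕ} (r : ℕ) (p : Pt ν) (C : Finset (Pt ν)) : Prop := p ∈ C ∧ C ∈ Bfam ν r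

lemma QConnected.reached {ν r : ℕ} {Q : Finset (Pt ν)} {Γ : Finset (Pt ν) →₀ ℕ}
    (hB : ↑Γ.support ⊆ Bfam ν r) (h : QConnected Q Γ) :
    Reached (memBfam r) id Q (Finsupp.toMultiset Γ) := by
  intro S h1 h2 C hC
  have hget : ∀ j : Fin Γ.support.toList.length,
      (Q :: Γ.support.toList).get j.succ ∈ Γ.support := by
    intro j
    rw [← Finset.mem_toList]
    exact List.get_mem _ j
  have key : ∀ j, Relation.ReflTransGen (fun a b : Fin (Q :: Γ.support.toList).length =>
      ((Q :: Γ.support.toList).get a ∩ (Q :: Γ.support.toList).get b).Nonempty) 0 j →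
      j = 0 ∨ (Q :: Γ.support.toList).get j ∈ S := by
    intro j hj
    induction hj with
    | refl => exact Or.inl rfl
    | @tail a b _ hab ih =>
      obtain ⟨p, hp⟩ := hab
      rw [Finset.mem_inter] at hp
      rcases Fin.eq_zero_or_eq_succ b with hb | ⟨b', rfl⟩
      · exact Or.inl hb
      right
      have hbT := hget b'
      have hpb : memBfam r p ((Q :: Γ.support.toList).get b'.succ) := ⟨hp.2, hB hbT⟩
      rcases Fin.eq_zero_or_eq_succ a with rfl | ⟨a', rfl⟩
      · exact h1 _ ((Finsupp.mem_toMultiset _ _).2 hbT) ⟨p, hp.1, hpb⟩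
      · exact h2 _ ((Finsupp.mem_toMultiset _ _).2 (hget a'))
          (ih.resolve_left (Fin.succ_ne_zero _)) _ ((Finsupp.mem_toMultiset _ _).2 hbT)
          ⟨p, hp.1, hpb⟩
  have hCl : C ∈ Γ.support.toList := Finset.mem_toList.2 ((Finsupp.mem_toMultiset _ _).1 hC)
  obtain ⟨i, hi⟩ := List.mem_iff_get.1 hCl
  have := (key i.succ (h 0 i.succ)).resolve_left (Fin.succ_ne_zero _)
  rw [← hi]
  exact this

/-- Let `Q ⊆ ℤ^ν` be a finite set with at least two elements,
`q = S(Q)`, and fix an integer `n > 1`. Then the number of `Q`-connected families `Γ`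
of length `n` is less than `2^{2q} (2 (8ν)^{2r})^n`. -/
theorem card_QConnected_families_lt {ν r : ℕ} (hν : 1 ≤ ν) (hr : 1 ≤ r)
    (Q : Finset (Pt ν)) (hQ : 2 ≤ Q.card) (q : ℕ) (hq : q = lsize Q)
    (n : ℕ) (hn : 1 < n) :
    {Γ : Finset (Pt ν) →₀ ℕ | ↑Γ.support ⊆ Bfam ν r ∧ famLen Γ = n ∧
      QConnected Q Γ}.Finite ∧
    {Γ : Finset (Pt ν) →₀ ℕ | ↑Γ.support ⊆ Bfam ν r ∧ famLen Γ = n ∧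
      QConnected Q Γ}.ncard < 2 ^ (2 * q) * (2 * (8 * ν) ^ (2 * r)) ^ n := by
  obtain ⟨m, rfl⟩ : ∃ m, n = m + 1 := ⟨n - 1, by omega⟩
  have hbound := reachedSet_bound (memBfam (ν := ν) r) id (2 * (16 * ν) ^ r) r
    (fun p => (Bfam_point_bound hν p).1) (fun p => (Bfam_point_bound hν p).2)
    (fun p C hC => by
      have h1 := card_le_lsize_add_one C
      have h2 := hC.2.2
      rw [id, Finset.insert_eq_of_mem hC.1]
      omega) m Q
  have hmaps : Set.MapsTo (fun Γ : Finset (Pt ν) →₀ ℕ => Finsupp.toMultiset Γ)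
      {Γ : Finset (Pt ν) →₀ ℕ | ↑Γ.support ⊆ Bfam ν r ∧ famLen Γ = m + 1 ∧ QConnected Q Γ}
      (reachedSet (memBfam r) id Q (m + 1)) := by
    rintro Γ ⟨hB, hlen, hc⟩
    exact ⟨(Finsupp.card_toMultiset Γ).trans hlen, hc.reached hB⟩
  have hinj : Function.Injective
      (fun Γ : Finset (Pt ν) →₀ ℕ => Finsupp.toMultiset Γ) := by
    classical
    exact Function.LeftInverse.injective Finsupp.toMultiset_toFinsupp
  refine ⟨Set.Finite.of_injOn hmaps hinj.injOn hbound.1, ?_⟩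
  have hle := Set.ncard_le_ncard_of_injOn _ hmaps hinj.injOn hbound.1
  have hpos : 0 < (2 ^ (r + 1) * (2 * (16 * ν) ^ r)) ^ (m + 1) := by positivity
  have hQq := card_le_lsize_add_one Q
  have hlt := lt_of_lt_of_le (Nat.lt_add_of_pos_right hpos) hbound.2
  refine hle.trans_lt (hlt.trans_le (Nat.mul_le_mul ?_ (Nat.pow_le_pow_left ?_ _)))
  · exact Nat.pow_le_pow_right (by norm_num) (by omega)
  · calc 2 ^ (r + 1) * (2 * (16 * ν) ^ r) = 2 * (2 * (32 * ν) ^ r) := by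
          rw [show 32 * ν = 2 * (16 * ν) by ring, mul_pow 2 (16 * ν)]; ring
      _ ≤ 2 * (2 ^ r * (32 * ν) ^ r) := by
          gcongr
          exact Nat.le_self_pow (by omega) 2
      _ = 2 * (64 * ν) ^ r := by rw [← mul_pow]; ring
      _ ≤ 2 * ((8 * ν) ^ 2) ^ r := by
          gcongr
          nlinarith
      _ = 2 * (8 * ν) ^ (2 * r) := by rw [pow_mul]
end
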